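/- arXiv:2505.09221 — 2 statements merged into one kernel-verified Lean document; each statement's English description precedes it below -/
import Mathlib

section
/- Sufficient condition for the output policy (Lemma 'sufficient condition'): Let γ₁, γ₂, γ_o be state types and m₁, m₂ states. Assume (i) if γ₂ ∩ γ_o ≠ • then γ₁ ⊔ γ₂ ⊑ γ_o; (ii) if γ₁ ∩ γ_o ≠ • then for every variable x, either (γ₂ x).1 ⊆ (γ_o x).1 or the label of (γ₁ ⊔ γ₂) at x is low; (iii) γ₁ ⊢ m₁, γ₂ ⊢ m₂ and m₁ ≈_{γ₁ ⊔ γ₂} m₂; and (iv) γ_o ⊢ m₁. Then γ_o ⊢ m₂ and m₁ ≈_{γ_o} m₂. -/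
/-- A state type assigns to each variable an interval and a security label. -/
def Types {Var : Type*} (γ : Var → Set ℕ × Bool) (m : Var → ℕ) : Prop :=
  ∀ x, m x ∈ (γ x).1

def LowEquiv {Var : Type*} (γ : Var → Set ℕ × Bool) (m₁ m₂ : Var → ℕ) : Prop :=
  ∀ x, (γ x).2 = false → m₁ x = m₂ x

def Join {Var : Type*} (γ₁ γ₂ : Var → Set ℕ × Bool) : Var → Set ℕ × Bool :=
  fun x => ((γ₁ x).1 ∩ (γ₂ x).1, (γ₁ x).2 || (γ₂ x).2)

def LabelLE {Var : Type*} (γ γ' : Var → Set ℕ × Bool) : Prop :=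
  ∀ x, (γ x).2 ≤ (γ' x).2

def NonEmptyMeet {Var : Type*} (γ γ' : Var → Set ℕ × Bool) : Prop :=
  ∀ x, ((γ x).1 ∩ (γ' x).1).Nonempty

theorem sufficient_condition {Var : Type*}
    (γ₁ γ₂ γo : Var → Set ℕ × Bool) (m₁ m₂ : Var → ℕ)
    (h1 : NonEmptyMeet γ₂ γo → LabelLE (Join γ₁ γ₂) γo)
    (h2 : NonEmptyMeet γ₁ γo →
      ∀ x, (γ₂ x).1 ⊆ (γo x).1 ∨ ((Join γ₁ γ₂) x).2 = false)
    (h3 : Types γ₁ m₁) (h4 : Types γ₂ m₂)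
    (h5 : LowEquiv (Join γ₁ γ₂) m₁ m₂)
    (h6 : Types γo m₁) :
    Types γo m₂ ∧ LowEquiv γo m₁ m₂ := by
  have ho : Types γo m₂ := fun x => by
    rcases h2 (fun y => ⟨m₁ y, h3 y, h6 y⟩) x with hsub | hlow
    · exact hsub (h4 x)
    · exact h5 x hlow ▸ h6 x
  -- `m₂` itself now witnesses that `γ₂` and `γo` meet, so the label bound `h1` applies.
  refine ⟨ho, fun x hx => h5 x ?_⟩
  have hle := h1 (fun y => ⟨m₂ y, h4 y, ho y⟩) x
  rw [hx] at hle
  exact le_bot_iff.mp hle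
end

section
/- Low equivalence update: assume DecidableEq Var. If m₁ ≈_{γ_a ⊔ γ_b} m₂ and m₃ ≈_{γ_c ⊔ γ_d} m₄, then for every variable x, expression e, and intervals I₁, I₂ ⊆ ℕ, the updated states Function.update m₁ x (eval m₃ e) and Function.update m₂ x (eval m₄ e) are low-equivalent wrt the join of the updated state types Function.update γ_a x (I₁, lblOf γ_c e) and Function.update γ_b x (I₂, lblOf γ_d e). -/
inductive Expr (Var : Type*) where
  | const : ℕ → Expr Var
  | var : Var → Expr Var
  | op : (ℕ → ℕ → ℕ) → Expr Var → Expr Var → Expr Var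

def eval {Var : Type*} (m : Var → ℕ) : Expr Var → ℕ
  | .const n => n
  | .var x => m x
  | .op f e₁ e₂ => f (eval m e₁) (eval m e₂)

def lblOf {Var : Type*} (γ : Var → Set ℕ × Bool) : Expr Var → Bool
  | .const _ => false
  | .var x => (γ x).2
  | .op _ e₁ e₂ => lblOf γ e₁ || lblOf γ e₂

/-- Noninterference for expressions: an expression that is low under both state types reads only
variables that are low in their join, so low-equivalent states agree on its value. -/
theorem eval_eq_of_lowEquiv_join {Var : Type*} {γ γ' : Var → Set ℕ × Bool} {m m' : Var → ℕ}
    (h : LowEquiv (Join γ γ') m m') (e : Expr Var)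
    (hγ : lblOf γ e = false) (hγ' : lblOf γ' e = false) : eval m e = eval m' e := by
  induction e with
  | const n => rfl
  | var x =>
    simp only [lblOf] at hγ hγ'
    exact h x (by simp [Join, hγ, hγ'])
  | op f e₁ e₂ ih₁ ih₂ =>
    simp only [lblOf, Bool.or_eq_false_iff] at hγ hγ'
    simp only [eval, ih₁ hγ.1 hγ'.1, ih₂ hγ.2 hγ'.2]

theorem low_equivalence_update {Var : Type*} [DecidableEq Var]
    (γa γb γc γd : Var → Set ℕ × Bool) (m₁ m₂ m₃ m₄ : Var → ℕ)
    (h1 : LowEquiv (Join γa γb) m₁ m₂)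
    (h2 : LowEquiv (Join γc γd) m₃ m₄) :
    ∀ (x : Var) (e : Expr Var) (I₁ I₂ : Set ℕ),
      LowEquiv
        (Join (Function.update γa x (I₁, lblOf γc e))
              (Function.update γb x (I₂, lblOf γd e)))
        (Function.update m₁ x (eval m₃ e))
        (Function.update m₂ x (eval m₄ e)) := by
  intro x e I₁ I₂ y hy
  by_cases hyx : y = x
  · subst hyx
    simp only [Join, Function.update_self, Bool.or_eq_false_iff] at hy
    simpa using eval_eq_of_lowEquiv_join h2 e hy.1 hy.2
  · simp only [Join, Function.update_of_ne hyx] at hy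
    simpa only [Function.update_of_ne hyx] using h1 y hy
end
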